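/- Let f be a C∞ diffeomorphism of ℝ² preserving Lebesgue measure and orientation, let q ≥ 1 be an integer, and let h be a C∞ diffeomorphism of ℝ² preserving Lebesgue measure and orientation, equal to the identity outside a compact set K, such that the sets K, f(K), f²(K), …, f^{q−1}(K) are pairwise disjoint. Then the map (h∘f)^q ∘ f^{−q} preserves Lebesgue measure and orientation, equals the identity outside the compact set K ∪ f(K) ∪ … ∪ f^{q−1}(K), and its total action satisfies A((h∘f)^q ∘ f^{−q}) = q·A(h). -/

import Mathlib

/-!
The total action is a conjugation-invariant homomorphism on area-preserving diffeomorphisms that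
are the identity off a compact set, and

  `(hf)^q f^{-q} = h ∘ (f h f⁻¹) ∘ ⋯ ∘ (f^{q-1} h f^{-(q-1)})`,

a product of `q` conjugates of `h`; hence its action is `q` times that of `h`. The product is
handled through the recursion `(hf)^{i+1} f^{-(i+1)} = h ∘ (f ∘ ((hf)^i f^{-i}) ∘ f⁻¹)`
(`iterate_comp_succ`).

With `λ = y dx`, additivity (`HasTotalAction.comp`) is the cocycle identity
`(h ∘ k)*λ - λ = k*(h*λ - λ) + (k*λ - λ)` together with invariance of the integral under `k`.
For conjugation invariance (`HasTotalAction.conj`), an area-preserving `f` has determinant `1`, so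
`f*λ - λ` is closed and by the Poincaré lemma equals `dS` for some `S`. If `G` is the action of
`k`, then the action of `f k f⁻¹` is `(G + S ∘ k - S) ∘ f⁻¹`, and `∫ (S ∘ k - S) = 0`
because `k` preserves area and a compact set off which it is the identity.
-/

open MeasureTheory Bornology

noncomputable section

/-- A `C^∞` diffeomorphism of `ℝ²` preserving Lebesgue measure and orientation. -/
def IsAPDiffeo (f : ℝ × ℝ → ℝ × ℝ) : Prop :=
  ContDiff ℝ (⊤ : ℕ∞) f ∧
  (∃ g : ℝ × ℝ → ℝ × ℝ, ContDiff ℝ (⊤ : ℕ∞) g ∧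
    Function.LeftInverse g f ∧ Function.RightInverse g f) ∧
  MeasurePreserving f volume volume ∧
  (∀ z, 0 < (fderiv ℝ f z).det)

/-- `z` lies in the unbounded component of the complement of `K`. -/
def InUnboundedComponent (K : Set (ℝ × ℝ)) (z : ℝ × ℝ) : Prop :=
  z ∉ K ∧ ¬ IsBounded (connectedComponentIn Kᶜ z)

/-- The normalized action function of `h` (w.r.t. the primitive `y dx`),
for `h` equal to the identity outside the compact set `K`. -/
def IsActionFn (h : ℝ × ℝ → ℝ × ℝ) (K : Set (ℝ × ℝ)) (g : ℝ × ℝ → ℝ) : Prop :=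
  ContDiff ℝ (⊤ : ℕ∞) g ∧
  (∀ z v : ℝ × ℝ, fderiv ℝ g z v = (h z).2 * (fderiv ℝ h z v).1 - z.2 * v.1) ∧
  (∀ z, InUnboundedComponent K z → g z = 0)

/-! ### Area-preserving diffeomorphisms of the plane -/

lemma IsAPDiffeo.contDiff {f : ℝ × ℝ → ℝ × ℝ} (hf : IsAPDiffeo f) :
    ContDiff ℝ (⊤ : ℕ∞) f := hf.1

lemma IsAPDiffeo.differentiable {f : ℝ × ℝ → ℝ × ℝ} (hf : IsAPDiffeo f) :
    Differentiable ℝ f := hf.1.differentiable (by simp)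

lemma IsAPDiffeo.injective {f : ℝ × ℝ → ℝ × ℝ} (hf : IsAPDiffeo f) :
    Function.Injective f := by
  obtain ⟨g, -, hg, -⟩ := hf.2.1
  exact hg.injective

lemma IsAPDiffeo.measurableEmbedding {f : ℝ × ℝ → ℝ × ℝ} (hf : IsAPDiffeo f) :
    MeasurableEmbedding f :=
  hf.contDiff.continuous.measurableEmbedding hf.injective

lemma isAPDiffeo_id : IsAPDiffeo id :=
  ⟨contDiff_id, ⟨id, contDiff_id, fun _ => rfl, fun _ => rfl⟩, MeasurePreserving.id _,
    fun z => by simp [ContinuousLinearMap.det]⟩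

lemma IsAPDiffeo.comp {f g : ℝ × ℝ → ℝ × ℝ} (hf : IsAPDiffeo f) (hg : IsAPDiffeo g) :
    IsAPDiffeo (f ∘ g) := by
  obtain ⟨f', hf's, hf'l, hf'r⟩ := hf.2.1
  obtain ⟨g', hg's, hg'l, hg'r⟩ := hg.2.1
  refine ⟨hf.1.comp hg.1, ⟨g' ∘ f', hg's.comp hf's, hf'l.comp hg'l, hf'r.comp hg'r⟩,
    hf.2.2.1.comp hg.2.2.1, fun z => ?_⟩
  rw [fderiv_comp z (hf.differentiable _) (hg.differentiable _)]
  have := mul_pos (hf.2.2.2 (g z)) (hg.2.2.2 z)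
  simpa [ContinuousLinearMap.det, LinearMap.det_comp] using this

lemma IsAPDiffeo.inverse {f f' : ℝ × ℝ → ℝ × ℝ} (hf : IsAPDiffeo f)
    (hf' : ContDiff ℝ (⊤ : ℕ∞) f')
    (hl : Function.LeftInverse f' f) (hr : Function.RightInverse f' f) : IsAPDiffeo f' := by
  have hd : Differentiable ℝ f' := hf'.differentiable (by simp)
  refine ⟨hf', ⟨f, hf.1, hr, hl⟩, ⟨hf'.continuous.measurable, ?_⟩, fun z => ?_⟩
  · conv_lhs => rw [← hf.2.2.1.map_eq]
    rw [Measure.map_map hf'.continuous.measurable hf.2.2.1.measurable, hl.comp_eq_id,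
      Measure.map_id]
  · have h1 : fderiv ℝ (f ∘ f') z = ContinuousLinearMap.id ℝ _ := by
      rw [hr.comp_eq_id]; exact fderiv_id
    rw [fderiv_comp z (hf.differentiable _) (hd _)] at h1
    have h2 : (fderiv ℝ f (f' z)).det * (fderiv ℝ f' z).det = 1 := by
      have := congrArg ContinuousLinearMap.det h1
      simpa [ContinuousLinearMap.det, LinearMap.det_comp] using this
    have h3 := hf.2.2.2 (f' z)
    exact (pos_iff_pos_of_mul_pos (by rw [h2]; exact one_pos)).1 h3

lemma det_prod_eq (A : ℝ × ℝ →L[ℝ] ℝ × ℝ) :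
    A.det = (A (1, 0)).1 * (A (0, 1)).2 - (A (0, 1)).1 * (A (1, 0)).2 := by
  rw [ContinuousLinearMap.det, ← LinearMap.det_toMatrix (Module.Basis.finTwoProd ℝ),
    Matrix.det_fin_two]
  simp [LinearMap.toMatrix_apply]

/-- `A*(dx ∧ dy) = det A • dx ∧ dy`, evaluated on the pair `(v, u)`. -/
lemma area_form_apply (A : ℝ × ℝ →L[ℝ] ℝ × ℝ) (u v : ℝ × ℝ) :
    (A u).2 * (A v).1 - (A v).2 * (A u).1 = A.det * (u.2 * v.1 - v.2 * u.1) := by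
  have key : ∀ w : ℝ × ℝ, A w = w.1 • A (1, 0) + w.2 • A (0, 1) := fun w => by
    rw [← map_smul, ← map_smul, ← map_add]; simp
  rw [det_prod_eq, key u, key v]
  simp only [Prod.fst_add, Prod.snd_add, Prod.smul_fst, Prod.smul_snd, smul_eq_mul]
  ring

/-- The change of variables formula gives `det Df = 1` almost everywhere, hence everywhere by
continuity. -/
lemma IsAPDiffeo.det_eq_one {f : ℝ × ℝ → ℝ × ℝ} (hf : IsAPDiffeo f) (z : ℝ × ℝ) :
    (fderiv ℝ f z).det = 1 := by
  have hc : Continuous fun z => (fderiv ℝ f z).det :=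
    ContinuousLinearMap.continuous_det.comp (hf.1.continuous_fderiv (by simp))
  have hc' : Continuous fun z => ENNReal.ofReal |(fderiv ℝ f z).det| :=
    ENNReal.continuous_ofReal.comp hc.abs
  have hae : (fun z => ENNReal.ofReal |(fderiv ℝ f z).det|) =ᵐ[volume] fun _ => 1 := by
    refine ae_eq_of_forall_setLIntegral_eq_of_sigmaFinite hc'.measurable measurable_const ?_
    intro s hs _
    rw [lintegral_abs_det_fderiv_eq_addHaar_image volume hs
      (fun x _ => (hf.differentiable x).hasFDerivAt.hasFDerivWithinAt) hf.injective.injOn,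
      ← hf.2.2.1.measure_preimage_emb hf.measurableEmbedding,
      Set.preimage_image_eq _ hf.injective]
    simp
  have h2 := congrFun ((Continuous.ae_eq_iff_eq volume hc' continuous_const).1 hae) z
  simpa [abs_of_pos (hf.2.2.2 z)] using h2

/-! ### The action form and its primitives -/

/-- The `1`-form `h*(y dx) − y dx` on `ℝ²`. -/
def actionForm (h : ℝ × ℝ → ℝ × ℝ) (z : ℝ × ℝ) : ℝ × ℝ →L[ℝ] ℝ :=
  (h z).2 • (ContinuousLinearMap.fst ℝ ℝ ℝ ∘L fderiv ℝ h z) - z.2 • ContinuousLinearMap.fst ℝ ℝ ℝ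

lemma actionForm_apply (h : ℝ × ℝ → ℝ × ℝ) (z v : ℝ × ℝ) :
    actionForm h z v = (h z).2 * (fderiv ℝ h z v).1 - z.2 * v.1 := by
  simp [actionForm]

/-- The exterior derivative of `f*(y dx) − y dx` is, up to sign, `(det Df - 1) dx ∧ dy = 0`, so the
form is exact by the Poincaré lemma. -/
lemma IsAPDiffeo.exists_primitive {f : ℝ × ℝ → ℝ × ℝ} (hf : IsAPDiffeo f) :
    ∃ S : ℝ × ℝ → ℝ, ∀ z, HasFDerivAt S (actionForm f z) z := by
  have hdf : Differentiable ℝ (fderiv ℝ f) :=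
    (hf.1.fderiv_right (m := (⊤ : ℕ∞)) (by simp)).differentiable (by simp)
  have hder : ∀ z u v : ℝ × ℝ, DifferentiableAt ℝ (actionForm f) z ∧
      fderiv ℝ (actionForm f) z u v = (fderiv ℝ f z u).2 * (fderiv ℝ f z v).1
        + (f z).2 * (fderiv ℝ (fderiv ℝ f) z u v).1 - u.2 * v.1 := by
    intro z u v
    have h1 : HasFDerivAt (fun z => (f z).2)
        (ContinuousLinearMap.snd ℝ ℝ ℝ ∘L fderiv ℝ f z) z :=
      (ContinuousLinearMap.snd ℝ ℝ ℝ).hasFDerivAt.comp z (hf.differentiable z).hasFDerivAt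
    have h2 := (hasFDerivAt_const (ContinuousLinearMap.fst ℝ ℝ ℝ) z).clm_comp
      (hdf z).hasFDerivAt
    have h3 := (h1.smul h2).sub ((hasFDerivAt_snd (𝕜 := ℝ) (p := z)).smul
      (hasFDerivAt_const (ContinuousLinearMap.fst ℝ ℝ ℝ) z))
    have h4 : HasFDerivAt (actionForm f) _ z := h3
    refine ⟨h4.differentiableAt, ?_⟩
    rw [h4.fderiv]
    simp
    ring
  obtain ⟨S, hS⟩ := convex_univ.exists_forall_hasFDerivAt_of_fderiv_symmetric
    (s := Set.univ) (ω := actionForm f) isOpen_univ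
    (fun z _ => (hder z 0 0).1.differentiableWithinAt) (fun z _ u v => by
      have hsymm : fderiv ℝ (fderiv ℝ f) z u v = fderiv ℝ (fderiv ℝ f) z v u :=
        (hf.1.contDiffAt.isSymmSndFDerivAt
          (by simpa using WithTop.coe_le_coe.2 (le_top : (2 : ℕ∞) ≤ ⊤))) u v
      have ha := area_form_apply (fderiv ℝ f z) u v
      rw [hf.det_eq_one] at ha
      rw [(hder z u v).2, (hder z v u).2, hsymm]
      linarith)
  exact ⟨S, fun z => hS z trivial⟩

/-- Cocycle identity: `(h ∘ k)*λ - λ = k*(h*λ - λ) + (k*λ - λ)` for `λ = y dx`. -/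
lemma primitive_comp {h k : ℝ × ℝ → ℝ × ℝ} {H G : ℝ × ℝ → ℝ}
    (hh : Differentiable ℝ h) (hk : Differentiable ℝ k)
    (hH : ∀ z, HasFDerivAt H (actionForm h z) z) (hG : ∀ z, HasFDerivAt G (actionForm k z) z)
    (z : ℝ × ℝ) : HasFDerivAt (fun z => H (k z) + G z) (actionForm (h ∘ k) z) z := by
  refine (((hH (k z)).comp z (hk z).hasFDerivAt).add (hG z)).congr_fderiv ?_
  refine ContinuousLinearMap.ext fun v => ?_
  simp [actionForm_apply, fderiv_comp z (hh _) (hk _)]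

lemma primitive_inverse {f f' : ℝ × ℝ → ℝ × ℝ} {S : ℝ × ℝ → ℝ}
    (hf : Differentiable ℝ f) (hf' : Differentiable ℝ f') (hr : Function.RightInverse f' f)
    (hS : ∀ z, HasFDerivAt S (actionForm f z) z)
    (z : ℝ × ℝ) : HasFDerivAt (fun z => - S (f' z)) (actionForm f' z) z := by
  have h1 : fderiv ℝ f (f' z) ∘L fderiv ℝ f' z = ContinuousLinearMap.id ℝ _ := by
    rw [← fderiv_comp z (hf _) (hf' _), hr.comp_eq_id]; exact fderiv_id
  have h2 : ∀ v, fderiv ℝ f (f' z) (fderiv ℝ f' z v) = v := fun v =>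
    congrArg (fun L : ℝ × ℝ →L[ℝ] ℝ × ℝ => L v) h1
  refine ((hS (f' z)).comp z (hf' z).hasFDerivAt).neg.congr_fderiv ?_
  refine ContinuousLinearMap.ext fun v => ?_
  simp [actionForm_apply, h2, hr z]

/-! ### Compactly supported action -/

/-- `k` is an area-preserving diffeomorphism, equal to the identity off a compact set, whose
compactly supported action function `G` has integral `a`. The single compact set `C` may be larger
than the support of `k`, so that the complementary bounded components, on which `G` is a possibly
nonzero constant, can be absorbed into it. -/
def HasTotalAction (k : ℝ × ℝ → ℝ × ℝ) (a : ℝ) : Prop :=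
  IsAPDiffeo k ∧ ∃ C : Set (ℝ × ℝ), IsCompact C ∧ (∀ z ∉ C, k z = z) ∧
    ∃ G : ℝ × ℝ → ℝ, (∀ z, HasFDerivAt G (actionForm k z) z) ∧ (∀ z ∉ C, G z = 0) ∧
      ∫ z, G z = a

lemma integrable_of_eq_zero_off_compact {G : ℝ × ℝ → ℝ} (hG : Continuous G)
    {C : Set (ℝ × ℝ)} (hC : IsCompact C) (h0 : ∀ z ∉ C, G z = 0) : Integrable G :=
  hG.integrable_of_hasCompactSupport (HasCompactSupport.intro hC h0)

lemma hasTotalAction_id : HasTotalAction id 0 :=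
  ⟨isAPDiffeo_id, ∅, isCompact_empty, fun _ _ => rfl, fun _ => 0, fun z => by
    refine (hasFDerivAt_const 0 z).congr_fderiv (ContinuousLinearMap.ext fun v => ?_)
    simp [actionForm_apply], fun _ _ => rfl, by simp⟩

lemma HasTotalAction.comp {h k : ℝ × ℝ → ℝ × ℝ} {a b : ℝ}
    (hh : HasTotalAction h a) (hk : HasTotalAction k b) : HasTotalAction (h ∘ k) (a + b) := by
  obtain ⟨hh, C, hC, hhC, H, hH, hH0, rfl⟩ := hh
  obtain ⟨hk, D, hD, hkD, G, hG, hG0, rfl⟩ := hk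
  have hHc : Continuous H := continuous_iff_continuousAt.2 fun z => (hH z).continuousAt
  have hGc : Continuous G := continuous_iff_continuousAt.2 fun z => (hG z).continuousAt
  refine ⟨hh.comp hk, C ∪ D, hC.union hD, fun z hz => ?_, _,
    primitive_comp hh.differentiable hk.differentiable hH hG, fun z hz => ?_, ?_⟩
  · rw [Set.mem_union, not_or] at hz
    simp [hkD z hz.2, hhC z hz.1]
  · rw [Set.mem_union, not_or] at hz
    simp [hkD z hz.2, hH0 z hz.1, hG0 z hz.2]
  · have hHk : Integrable fun z => H (k z) := (hk.2.2.1.integrable_comp_emb hk.measurableEmbedding).2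
      (integrable_of_eq_zero_off_compact hHc hC hH0)
    rw [integral_add hHk (integrable_of_eq_zero_off_compact hGc hD hG0),
      hk.2.2.1.integral_comp hk.measurableEmbedding]

/-- Since `k` preserves both area and the compact set `C` off which it is the identity,
`∫ (S ∘ k - S) = ∫_C S ∘ k - ∫_C S = 0`, even though `S` itself need not be integrable. -/
lemma integral_comp_sub_self {k : ℝ × ℝ → ℝ × ℝ} (hk : IsAPDiffeo k) {C : Set (ℝ × ℝ)}
    (hC : IsCompact C) (hkC : ∀ z ∉ C, k z = z) {S : ℝ × ℝ → ℝ} (hS : Continuous S) :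
    ∫ z, (S (k z) - S z) = 0 := by
  have hpre : k ⁻¹' C = C := by
    ext z
    refine ⟨fun hz => ?_, fun hz => ?_⟩
    · by_contra hzC
      rw [Set.mem_preimage, hkC z hzC] at hz
      exact hzC hz
    · by_contra hkz
      have h1 : k z = z := hk.injective (hkC _ hkz)
      rw [Set.mem_preimage, h1] at hkz
      exact hkz hz
  have hkc := hk.contDiff.continuous
  have hSk : IntegrableOn (fun z => S (k z)) C :=
    (hS.comp hkc).continuousOn.integrableOn_compact hC
  rw [← setIntegral_eq_integral_of_forall_compl_eq_zero (s := C)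
    (fun z hz => by rw [hkC z hz, sub_self]),
    integral_sub hSk (hS.continuousOn.integrableOn_compact hC)]
  have := hk.2.2.1.setIntegral_preimage_emb hk.measurableEmbedding S C
  rw [hpre] at this
  rw [this, sub_self]

/-- The total action is invariant under conjugation by area-preserving diffeomorphisms `f`, which
need not be compactly supported. -/
lemma HasTotalAction.conj {f f' k : ℝ × ℝ → ℝ × ℝ} {a : ℝ} (hf : IsAPDiffeo f)
    (hf' : IsAPDiffeo f') (hr : Function.RightInverse f' f)
    (hk : HasTotalAction k a) : HasTotalAction (f ∘ k ∘ f') a := by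
  obtain ⟨hk, C, hC, hkC, G, hG, hG0, rfl⟩ := hk
  obtain ⟨S, hS⟩ := hf.exists_primitive
  have hSc : Continuous S := continuous_iff_continuousAt.2 fun z => (hS z).continuousAt
  have hGc : Continuous G := continuous_iff_continuousAt.2 fun z => (hG z).continuousAt
  have hkc := hk.contDiff.continuous
  have hmem : ∀ z ∉ f '' C, f' z ∉ C := fun z hz hzC => hz ⟨_, hzC, hr z⟩
  refine ⟨hf.comp (hk.comp hf'), f '' C, hC.image hf.contDiff.continuous, fun z hz => ?_, _,
    primitive_comp hf.differentiable (hk.comp hf').differentiable hS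
      (primitive_comp hk.differentiable hf'.differentiable hG
        (primitive_inverse hf.differentiable hf'.differentiable hr hS)), fun z hz => ?_, ?_⟩
  · simp [hkC _ (hmem z hz), hr z]
  · simp [hkC _ (hmem z hz), hG0 _ (hmem z hz)]
  · have h1 := hf'.2.2.1.integral_comp hf'.measurableEmbedding
      (fun w => G w + (S (k w) - S w))
    have hint : Integrable fun w => S (k w) - S w :=
      integrable_of_eq_zero_off_compact (by fun_prop) hC
        (fun z hz => by rw [hkC z hz, sub_self])
    rw [integral_add (integrable_of_eq_zero_off_compact hGc hC hG0) hint,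
      integral_comp_sub_self hk hC hkC hSc, add_zero] at h1
    rw [← h1]
    refine integral_congr_ae (.of_forall fun z => ?_)
    simp only [Function.comp_apply]
    ring

/-! ### Normalization at infinity -/

/-- The ray `{t z : t ≥ 1}` is a connected unbounded subset of `Kᶜ` once `‖z‖` is large. -/
lemma exists_radius_inUnboundedComponent {K : Set (ℝ × ℝ)} (hK : IsCompact K) :
    ∃ R : ℝ, ∀ z : ℝ × ℝ, z ∉ Metric.closedBall (0 : ℝ × ℝ) R → InUnboundedComponent K z := by
  obtain ⟨R, hR0, hR⟩ := hK.isBounded.subset_closedBall_lt 0 (0 : ℝ × ℝ)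
  refine ⟨R, fun z hz => ⟨fun h => hz (hR h), fun hb => ?_⟩⟩
  have hzR : R < ‖z‖ := by simpa using hz
  set ray : Set (ℝ × ℝ) := (fun t : ℝ => t • z) '' Set.Ici 1
  have hconn : IsPreconnected ray :=
    isPreconnected_Ici.image _ (by fun_prop)
  have hsub : ray ⊆ Kᶜ := by
    rintro _ ⟨t, ht, rfl⟩ hmem
    have h1 := hR hmem
    rw [Set.mem_Ici] at ht
    rw [mem_closedBall_zero_iff, norm_smul, Real.norm_of_nonneg (by linarith)] at h1
    nlinarith [norm_nonneg z]
  have hb' : IsBounded ray := hb.subset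
    (hconn.subset_connectedComponentIn ⟨1, Set.self_mem_Ici, one_smul _ _⟩ hsub)
  obtain ⟨M, hM⟩ := hb'.exists_norm_le
  have hz0 : 0 < ‖z‖ := hR0.trans hzR
  have h2 := hM ((|M| / ‖z‖ + 1) • z)
    ⟨_, by rw [Set.mem_Ici]; linarith [div_nonneg (abs_nonneg M) hz0.le], rfl⟩
  rw [norm_smul, Real.norm_of_nonneg (by positivity), add_mul, div_mul_cancel₀ _ hz0.ne'] at h2
  linarith [le_abs_self M]

lemma IsActionFn.hasFDerivAt {h : ℝ × ℝ → ℝ × ℝ} {K : Set (ℝ × ℝ)} {g : ℝ × ℝ → ℝ}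
    (hg : IsActionFn h K g) (z : ℝ × ℝ) : HasFDerivAt g (actionForm h z) z := by
  refine ((hg.1.differentiable (by simp)) z).hasFDerivAt.congr_fderiv
    (ContinuousLinearMap.ext fun v => ?_)
  rw [hg.2.1, actionForm_apply]

lemma IsActionFn.hasTotalAction {h : ℝ × ℝ → ℝ × ℝ} {K : Set (ℝ × ℝ)} {g : ℝ × ℝ → ℝ}
    (hK : IsCompact K) (hh : IsAPDiffeo h) (hid : ∀ z ∉ K, h z = z)
    (hg : IsActionFn h K g) : HasTotalAction h (∫ z, g z) := by
  obtain ⟨R, hR⟩ := exists_radius_inUnboundedComponent hK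
  exact ⟨hh, Metric.closedBall 0 R, isCompact_closedBall _ _, fun z hz => hid z (hR z hz).1,
    g, hg.hasFDerivAt, fun z hz => hg.2.2 z (hR z hz), rfl⟩

/-- Two primitives of the same form differ by a constant, which is seen to be `0` at a point far
from the origin. -/
lemma IsActionFn.integral_eq {F : ℝ × ℝ → ℝ × ℝ} {K : Set (ℝ × ℝ)} {g : ℝ × ℝ → ℝ} {a : ℝ}
    (hK : IsCompact K) (hg : IsActionFn F K g) (hF : HasTotalAction F a) : ∫ z, g z = a := by
  obtain ⟨-, C, hC, -, G, hG, hG0, rfl⟩ := hF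
  obtain ⟨R, hR⟩ := exists_radius_inUnboundedComponent hK
  obtain ⟨p, hp⟩ : ∃ p, p ∉ Metric.closedBall (0 : ℝ × ℝ) R ∪ C := by
    have := ((isCompact_closedBall (0 : ℝ × ℝ) R).union hC).ne_univ
    exact (Set.ne_univ_iff_exists_notMem _).1 this
  rw [Set.mem_union, not_or] at hp
  have hsub : ∀ z, HasFDerivAt (fun z => g z - G z) (0 : ℝ × ℝ →L[ℝ] ℝ) z := fun z =>
    ((hg.hasFDerivAt z).sub (hG z)).congr_fderiv (sub_self _)
  refine integral_congr_ae (.of_forall fun z => ?_)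
  have h1 := is_const_of_fderiv_eq_zero (fun z => (hsub z).differentiableAt)
    (fun z => (hsub z).fderiv) z p
  simp only [hG0 p hp.2, hg.2.2 p (hR p hp.1), sub_zero] at h1
  exact sub_eq_zero.1 h1

/-! ### Iterates -/

/-- `(hf)ⁱ⁺¹ f⁻⁽ⁱ⁺¹⁾ = h ∘ (f ∘ ((hf)ⁱ f⁻ⁱ) ∘ f⁻¹)`. -/
lemma iterate_comp_succ (f f' h : ℝ × ℝ → ℝ × ℝ) (i : ℕ) :
    (h ∘ f)^[i + 1] ∘ f'^[i + 1] = h ∘ (f ∘ ((h ∘ f)^[i] ∘ f'^[i]) ∘ f') := by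
  rw [Function.iterate_succ' (h ∘ f), Function.iterate_succ f']
  rfl

lemma iterate_comp_eq_self {f f' h : ℝ × ℝ → ℝ × ℝ} {K : Set (ℝ × ℝ)}
    (hr : Function.RightInverse f' f) (hid : ∀ z ∉ K, h z = z) (q : ℕ) :
    ∀ z ∉ ⋃ i < q, f^[i] '' K, ((h ∘ f)^[q] ∘ f'^[q]) z = z := by
  induction q with
  | zero => intro z _; rfl
  | succ q ih =>
    intro z hz
    simp only [Set.mem_iUnion, not_exists] at hz
    have h1 : f' z ∉ ⋃ i < q, f^[i] '' K := by
      simp only [Set.mem_iUnion, not_exists]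
      rintro i hi ⟨w, hw, hwz⟩
      exact hz (i + 1) (by omega) ⟨w, hw, by rw [Function.iterate_succ_apply', hwz, hr z]⟩
    have h2 : z ∉ K := fun hzK => hz 0 (by omega) ⟨z, hzK, rfl⟩
    have h3 := ih _ h1
    rw [iterate_comp_succ]
    simp only [Function.comp_apply] at h3 ⊢
    rw [h3, hr z, hid z h2]

theorem stmt16 (f f' : ℝ × ℝ → ℝ × ℝ) (hf : IsAPDiffeo f)
    (hf'sm : ContDiff ℝ (⊤ : ℕ∞) f')
    (hfinv : Function.LeftInverse f' f ∧ Function.RightInverse f' f)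
    (q : ℕ) (hq : 1 ≤ q)
    (h : ℝ × ℝ → ℝ × ℝ) (K : Set (ℝ × ℝ)) (hK : IsCompact K)
    (hh : IsAPDiffeo h) (hid : ∀ z ∉ K, h z = z)
    (hdisj : ∀ i j, i < q → j < q → i ≠ j → Disjoint (f^[i] '' K) (f^[j] '' K)) :
    MeasurePreserving ((h ∘ f)^[q] ∘ f'^[q]) volume volume ∧
    (∀ z, 0 < (fderiv ℝ ((h ∘ f)^[q] ∘ f'^[q]) z).det) ∧
    IsCompact (⋃ i < q, f^[i] '' K) ∧
    (∀ z ∉ ⋃ i < q, f^[i] '' K, ((h ∘ f)^[q] ∘ f'^[q]) z = z) ∧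
    (∀ gF gh : ℝ × ℝ → ℝ,
      IsActionFn ((h ∘ f)^[q] ∘ f'^[q]) (⋃ i < q, f^[i] '' K) gF →
      IsActionFn h K gh →
      ∫ z, gF z = (q : ℝ) * ∫ z, gh z) := by
  obtain ⟨hl, hr⟩ := hfinv
  have hf' : IsAPDiffeo f' := hf.inverse hf'sm hl hr
  have hcomp : IsCompact (⋃ i < q, f^[i] '' K) :=
    (Set.finite_lt_nat q).isCompact_biUnion fun i _ =>
      hK.image (hf.contDiff.continuous.iterate i)
  have hF : ∀ n : ℕ, IsAPDiffeo ((h ∘ f)^[n] ∘ f'^[n]) := by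
    intro n
    induction n with
    | zero => exact isAPDiffeo_id
    | succ n ih =>
      rw [iterate_comp_succ]
      exact hh.comp (hf.comp (ih.comp hf'))
  refine ⟨(hF q).2.2.1, (hF q).2.2.2, hcomp, iterate_comp_eq_self hr hid q, ?_⟩
  intro gF gh hgF hgh
  have hA : ∀ n : ℕ, HasTotalAction ((h ∘ f)^[n] ∘ f'^[n]) (n * ∫ z, gh z) := by
    intro n
    induction n with
    | zero => simpa using hasTotalAction_id
    | succ n ih =>
      rw [iterate_comp_succ]
      have := (hgh.hasTotalAction hK hh hid).comp (ih.conj hf hf' hr)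
      rwa [show ((n + 1 : ℕ) : ℝ) * ∫ z, gh z = (∫ z, gh z) + n * ∫ z, gh z by
        push_cast; ring]
  exact hgF.integral_eq hcomp (hA q)
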